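/- (Error estimate on the invariant measure of discretized Feynman–Kac semigroups.) In the torus setting described in the context, suppose: (i) the family (Q_Δt^W)_{Δt ∈ (0,Δt₀]} of weighted evolution operators on the torus maps S to S, each Q_Δt^W satisfies a minorization condition (so it has a unique invariant probability measure ν_{W,Δt}), and admits the expansion Q_Δt^W φ = φ + Σ_{k=1}^{p+1} Δt^k Ã_k φ + Δt^{p+2} R_{W,Δt} φ with ‖R_{W,Δt}φ‖_{C⁰} ≤ c ‖φ‖_{C^m} uniformly in Δt ∈ (0,Δt₀], where Ã_1 φ = A_1 φ + Wφ and A_1 1 = 0; (ii) (stability) for every g ∈ S_W there is a unique u ∈ S_W with (A_1 + W − λ)u = g, and for every g ∈ Ŝ_W there is a unique v ∈ Ŝ_W with (A_1* + W − λ)v = g; (iii) (spectral consistency) (A_1 + W)ĥ_W = λ ĥ_W, and ∫ W dν_W = λ; (iv) (invariance) for each k = 1, …, p there is a_k ∈ ℝ with ∫ (Ã_k φ) dν_W = a_k ∫ φ dν_W for all φ ∈ S. Define g̃ = −(Ã_{p+1})* h_W + h_W · (∫ Ã_{p+1} ĥ_W dν_W)/(∫ ĥ_W dν_W) (which lies in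 Ŝ_W), let v ∈ Ŝ_W be the unique solution of (A_1* + W − λ)v = g̃, set f₀ = v/h_W and f = f₀ − ∫ f₀ dν_W. Then there exist Δt* ∈ (0,Δt₀], C > 0 and m' ∈ ℕ such that for all Δt ∈ (0,Δt*] and all φ ∈ S: |∫ φ dν_{W,Δt} − ∫ φ dν_W − Δt^p ∫ φ f dν_W| ≤ C Δt^{p+1} ‖φ‖_{C^{m'}}. -/

import Mathlib

open MeasureTheory ProbabilityTheory Finset

/-- The d-dimensional torus `ℝ^d/ℤ^d`. -/
abbrev Torus (d : ℕ) := Fin d → AddCircle (1:ℝ)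

/-- The canonical projection `ℝ^d → ℝ^d/ℤ^d`. -/
noncomputable def Torus.proj {d : ℕ} (q : Fin d → ℝ) : Torus d := fun i => (q i : AddCircle (1:ℝ))

/-- Partial derivative in the i-th coordinate direction. -/
noncomputable def pderiv' {d : ℕ} (i : Fin d) (f : (Fin d → ℝ) → ℝ) (q : Fin d → ℝ) : ℝ :=
  fderiv ℝ f q (Pi.single i 1)

/-- ℤ^d-periodicity. -/
def ZPeriodic {d : ℕ} (f : (Fin d → ℝ) → ℝ) : Prop :=
  ∀ (q : Fin d → ℝ) (m : Fin d → ℤ), f (fun i => q i + (m i : ℝ)) = f q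

/-- Iterated partial derivative `∂^α` along a list of coordinate directions. -/
noncomputable def iterPDeriv {d : ℕ} : List (Fin d) → ((Fin d → ℝ) → ℝ) → (Fin d → ℝ) → ℝ
  | [], f => f
  | i :: l, f => pderiv' i (iterPDeriv l f)

/-- The C^m norm: `‖f‖_{C^m} = sup_{|α| ≤ m} sup_q |∂^α f(q)|`. -/
noncomputable def CmNorm {d : ℕ} (m : ℕ) (f : (Fin d → ℝ) → ℝ) : ℝ :=
  ⨆ p : {l : List (Fin d) // l.length ≤ m} × (Fin d → ℝ), |iterPDeriv p.1.1 f p.2|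

/-- A function on the torus is smooth when its ℤ^d-periodic lift to ℝ^d is smooth;
this identifies S with the smooth ℤ^d-periodic functions on ℝ^d. -/
def TSmooth {d : ℕ} (φ : Torus d → ℝ) : Prop :=
  ContDiff ℝ (⊤ : ℕ∞) (fun q : Fin d → ℝ => φ (Torus.proj q))

/-- The C^m norm of a function on the torus, computed through its periodic lift. -/
noncomputable def TCmNorm {d : ℕ} (m : ℕ) (φ : Torus d → ℝ) : ℝ :=
  CmNorm m (fun q : Fin d → ℝ => φ (Torus.proj q))

/-- The unit cube `[0,1)^d`, a fundamental domain of the torus. -/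
def unitCube (d : ℕ) : Set (Fin d → ℝ) := Set.univ.pi fun _ => Set.Ico (0:ℝ) 1

/-- The action of a weighted evolution operator given by a kernel. -/
noncomputable def evolOp {X : Type*} [MeasurableSpace X] (κ : Kernel X X) (φ : X → ℝ) : X → ℝ :=
  fun q => ∫ q', φ q' ∂(κ q)

/-- Bounded measurable real-valued functions. -/
def BddMeas {X : Type*} [MeasurableSpace X] (φ : X → ℝ) : Prop :=
  Measurable φ ∧ ∃ C : ℝ, ∀ x, |φ x| ≤ C

/-- Minorization condition. -/
def Minorizes {X : Type*} [MeasurableSpace X] (Q : (X → ℝ) → (X → ℝ)) (ε : ℝ)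
    (η : Measure X) : Prop :=
  ∀ φ : X → ℝ, BddMeas φ → (∀ x, 0 ≤ φ x) → ∀ q,
    ε * ∫ x, φ x ∂η ≤ Q φ q ∧ Q φ q ≤ ε⁻¹ * ∫ x, φ x ∂η

/-- Fixed-point (stationarity) equation characterizing the invariant probability measure. -/
def FixedPt {X : Type*} [MeasurableSpace X] (κ : Kernel X X) (μ : Measure X) : Prop :=
  ∀ φ : X → ℝ, BddMeas φ →
    ∫ q, evolOp κ φ q ∂μ = (∫ q, evolOp κ (fun _ => (1:ℝ)) q ∂μ) * ∫ q, φ q ∂μ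

/-!
Averaging the expansion of `Q_Δt φ` against its invariant measure `μ_Δt` and subtracting the
eigenvalue makes `μ_Δt` stationary, up to `O(Δt ^ (p + 2))`, for the generators `B_k = Ã_k - a_k`,
where `a_{p+1}` is chosen so that `ν_W (B_{p+1} ĥ_W) = 0`. Suppose the error `μ_Δt - ν_W` is
`O(Δt ^ r)` with `r ≤ p`. Since `ν_W` annihilates `B_2, …, B_p`, testing on `ĥ_W`, which also
`B_1` annihilates, shows that the eigenvalue defect is `O(Δt ^ (r + 2))`; testing on the solution
`u` of `B_1 u = φ - ν_W φ` then gives the error as `-Δt ^ p ν_W (B_{p+1} u) + O(Δt ^ (r + 1))`.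
So the order climbs from `0` to `p`, and one last step isolates the leading term, which by duality
is `Δt ^ p ν_W (f φ)`. The constants obtained in this way depend on `φ` in an uncontrolled manner;
the Banach–Steinhaus theorem on the Fréchet space of smooth functions makes them uniform.
-/

section Bootstrap

open Asymptotics Filter

/-- Functionals `μ a`, tested on a set `S`, that are stationary up to order `t ^ (p + 2)`: with the
eigenvalue defect `D` and the generators `B k` of the expansion, all of them centred by the
candidate limit `π` except the last one. -/
structure IsStationaryExpansion {α E : Type*} (l : Filter α) (t : α → ℝ) (p : ℕ) (S : Set E)
    (μ : α → E → ℝ) (D : α → ℝ) (B : ℕ → E → E) (π : E → ℝ) : Prop where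
  isBigO_param : t =O[l] (1 : α → ℝ)
  param_ne_zero : ∀ᶠ a in l, t a ≠ 0
  map_mem : ∀ k ∈ Icc 1 (p + 1), ∀ ψ ∈ S, B k ψ ∈ S
  isBigO_one : ∀ ψ ∈ S, (fun a => μ a ψ) =O[l] (1 : α → ℝ)
  isBigO_stationary : ∀ ψ ∈ S,
    (fun a => D a * μ a ψ - ∑ k ∈ Icc 1 (p + 1), t a ^ k * μ a (B k ψ))
      =O[l] fun a => t a ^ (p + 2)
  limit_eq_zero : ∀ k ∈ Icc 1 p, ∀ ψ ∈ S, π (B k ψ) = 0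

theorem isBigO_pow_pow_of_le {α : Type*} {l : Filter α} {t : α → ℝ}
    (ht : t =O[l] (1 : α → ℝ)) {m n : ℕ} (hmn : m ≤ n) :
    (fun a => t a ^ n) =O[l] fun a => t a ^ m := by
  obtain ⟨j, rfl⟩ := Nat.exists_eq_add_of_le hmn
  simpa [pow_add] using (isBigO_refl (fun a => t a ^ m) l).mul (ht.pow j)

namespace IsStationaryExpansion

variable {α E : Type*} {l : Filter α} {t : α → ℝ} {p : ℕ} {S : Set E} {μ : α → E → ℝ}
  {D : α → ℝ} {B : ℕ → E → E} {π : E → ℝ}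

theorem isBigO_sub_first_sub_last (h : IsStationaryExpansion l t p S μ D B π) (hp : 1 ≤ p) {r : ℕ}
    (hr : r ≤ p) (herr : ∀ φ ∈ S, (fun a => μ a φ - π φ) =O[l] fun a => t a ^ r)
    {ψ : E} (hψ : ψ ∈ S) :
    (fun a => D a * μ a ψ - t a * μ a (B 1 ψ) - t a ^ (p + 1) * π (B (p + 1) ψ))
      =O[l] fun a => t a ^ (r + 2) := by
  have hlower : (fun a => ∑ k ∈ Ioc 1 (p + 1), t a ^ k * (μ a (B k ψ) - π (B k ψ)))
      =O[l] fun a => t a ^ (r + 2) := by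
    refine IsBigO.fun_sum fun k hk => ?_
    obtain ⟨hk1, hkp⟩ := mem_Ioc.1 hk
    refine ((isBigO_refl _ l).mul (herr _ (h.map_mem k (mem_Icc.2 ⟨hk1.le, hkp⟩) ψ hψ))).trans ?_
    simpa only [← pow_add] using isBigO_pow_pow_of_le h.isBigO_param (by lia : r + 2 ≤ k + r)
  have hstationary := (h.isBigO_stationary ψ hψ).trans
    (isBigO_pow_pow_of_le h.isBigO_param (by lia : r + 2 ≤ p + 2))
  refine (hstationary.add hlower).congr_left fun a => ?_
  have hsplit : ∑ k ∈ Icc 1 (p + 1), t a ^ k * μ a (B k ψ)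
      = t a * μ a (B 1 ψ) + ∑ k ∈ Ioc 1 (p + 1), t a ^ k * μ a (B k ψ) := by
    simpa only [pow_one] using
      (add_sum_Ioc_eq_sum_Icc (f := fun k => t a ^ k * μ a (B k ψ)) (by lia : 1 ≤ p + 1)).symm
  have hlimit : ∑ k ∈ Ioc 1 (p + 1), t a ^ k * π (B k ψ)
      = t a ^ (p + 1) * π (B (p + 1) ψ) := by
    refine sum_eq_single_of_mem _ (mem_Ioc.2 ⟨by lia, le_rfl⟩) fun k hk hne => ?_
    rw [h.limit_eq_zero k (by grind) ψ hψ, mul_zero]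
  simp only [mul_sub, sum_sub_distrib, hsplit, hlimit]
  ring

theorem isBigO_defect (h : IsStationaryExpansion l t p S μ D B π) (hp : 1 ≤ p) {r : ℕ}
    (hr : r ≤ p) (herr : ∀ φ ∈ S, (fun a => μ a φ - π φ) =O[l] fun a => t a ^ r)
    {e : E} (he : e ∈ S) (hone : (1 : α → ℝ) =O[l] fun a => μ a e)
    (hfirst : ∀ a, μ a (B 1 e) = 0) (hlast : π (B (p + 1) e) = 0) :
    D =O[l] fun a => t a ^ (r + 2) := by
  have hmul : (fun a => D a * μ a e) =O[l] fun a => t a ^ (r + 2) :=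
    (h.isBigO_sub_first_sub_last hp hr herr he).congr_left fun a => by simp [hfirst, hlast]
  simpa using ((isBigO_refl D l).mul hone).trans hmul

theorem isBigO_first_add_last (h : IsStationaryExpansion l t p S μ D B π) (hp : 1 ≤ p) {r : ℕ}
    (hr : r ≤ p) (herr : ∀ φ ∈ S, (fun a => μ a φ - π φ) =O[l] fun a => t a ^ r)
    (hD : D =O[l] fun a => t a ^ (r + 2)) {ψ : E} (hψ : ψ ∈ S) :
    (fun a => μ a (B 1 ψ) + t a ^ p * π (B (p + 1) ψ)) =O[l] fun a => t a ^ (r + 1) := by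
  have hmul : (fun a => t a * (μ a (B 1 ψ) + t a ^ p * π (B (p + 1) ψ)))
      =O[l] fun a => t a ^ (r + 2) := by
    refine ((hD.mul (h.isBigO_one ψ hψ)).congr_right (fun a => ?_)).sub
      (h.isBigO_sub_first_sub_last hp hr herr hψ) |>.congr_left fun a => ?_
    · simp
    · ring
  refine ((isBigO_refl (fun a => (t a)⁻¹) l).mul hmul).congr' ?_ ?_ <;>
    filter_upwards [h.param_ne_zero] with a ha
  · exact inv_mul_cancel_left₀ ha _
  · rw [pow_succ' (t a) (r + 1), inv_mul_cancel_left₀ ha]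

theorem isBigO_error_add_last (h : IsStationaryExpansion l t p S μ D B π) (hp : 1 ≤ p)
    {e : E} (he : e ∈ S) (hone : (1 : α → ℝ) =O[l] fun a => μ a e)
    (hfirst : ∀ a, μ a (B 1 e) = 0) (hlast : π (B (p + 1) e) = 0)
    (hsolve : ∀ φ ∈ S, ∃ ψ ∈ S, ∀ a, μ a (B 1 ψ) = μ a φ - π φ)
    {φ ψ : E} (hψ : ψ ∈ S) (hφψ : ∀ a, μ a (B 1 ψ) = μ a φ - π φ) :
    (fun a => μ a φ - π φ + t a ^ p * π (B (p + 1) ψ)) =O[l] fun a => t a ^ (p + 1) := by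
  have hcorr {r : ℕ} (hr : r ≤ p) (herr : ∀ φ ∈ S, (fun a => μ a φ - π φ) =O[l] fun a => t a ^ r)
      {φ ψ : E} (hψ : ψ ∈ S) (hφψ : ∀ a, μ a (B 1 ψ) = μ a φ - π φ) :
      (fun a => μ a φ - π φ + t a ^ p * π (B (p + 1) ψ)) =O[l] fun a => t a ^ (r + 1) :=
    (h.isBigO_first_add_last hp hr herr
      (h.isBigO_defect hp hr herr he hone hfirst hlast) hψ).congr_left fun a => by rw [hφψ]
  have herr (r : ℕ) (hr : r ≤ p) :
      ∀ φ ∈ S, (fun a => μ a φ - π φ) =O[l] fun a => t a ^ r := by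
    induction r with
    | zero =>
      intro φ hφ
      simp only [pow_zero]
      exact (h.isBigO_one φ hφ).sub (isBigO_const_const (π φ) one_ne_zero l)
    | succ r ih =>
      intro φ hφ
      obtain ⟨ψ, hψ, hφψ⟩ := hsolve φ hφ
      have hlast : (fun a => t a ^ p * π (B (p + 1) ψ)) =O[l] fun a => t a ^ (r + 1) := by
        simpa only [mul_comm] using
          (isBigO_pow_pow_of_le h.isBigO_param hr).const_mul_left (π (B (p + 1) ψ))
      exact ((hcorr (by lia) (ih (by lia)) hψ hφψ).sub hlast).congr_left fun a => by ring
  exact hcorr le_rfl (herr p le_rfl) hψ hφψ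

end IsStationaryExpansion

end Bootstrap

theorem exists_abs_le_sum_norm_of_isClosed_range {ι κ V : Type*} [Countable κ]
    [AddCommGroup V] [Module ℝ V] {F : κ → Type*} [∀ k, NormedAddCommGroup (F k)]
    [∀ k, NormedSpace ℝ (F k)] [∀ k, CompleteSpace (F k)] (D : V →ₗ[ℝ] Π k, F k)
    (hinj : Function.Injective D) (hclosed : IsClosed (Set.range D)) (L : ι → V →ₗ[ℝ] ℝ)
    (hbdd : ∀ i, ∃ k, ∃ C : ℝ, ∀ v, |L i v| ≤ C * ‖D v k‖) (hpt : ∀ v, ∃ C, ∀ i, |L i v| ≤ C) :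
    ∃ C : ℝ, 0 ≤ C ∧ ∃ s : Finset κ, ∀ i v, |L i v| ≤ C * ∑ k ∈ s, ‖D v k‖ := by
  let : TopologicalSpace V := .induced D inferInstance
  have hemb : Topology.IsClosedEmbedding D := ⟨⟨⟨rfl⟩, hinj⟩, hclosed⟩
  have := topologicalAddGroup_induced D
  have := continuousSMul_induced D
  have := hemb.IsCompletelyPseudoMetrizableSpace
  let q (k : κ) : Seminorm ℝ V := (normSeminorm ℝ (F k)).comp (.proj k ∘ₗ D)
  have hq (k : κ) : Continuous (q k) := ((continuous_apply k).comp hemb.continuous).norm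
  let P (i : ι) : Seminorm ℝ V := (normSeminorm ℝ ℝ).comp (L i)
  have hP (i : ι) : Continuous (P i) := by
    obtain ⟨k, C, hC⟩ := hbdd i
    refine Seminorm.continuous_of_le (q := C.toNNReal • q k) ((hq k).const_smul _) fun v => ?_
    exact (hC v).trans (mul_le_mul_of_nonneg_right (Real.le_coe_toNNReal C) (norm_nonneg _))
  have hPbdd : BddAbove (Set.range P) := (Seminorm.bddAbove_range_iff).2 fun v => by
    obtain ⟨C, hC⟩ := hpt v
    exact ⟨C, by rintro _ ⟨i, rfl⟩; exact hC i⟩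
  have hsup : Continuous (⨆ i, P i : Seminorm ℝ V) := by
    rw [Seminorm.coe_iSup_eq hPbdd]
    exact Seminorm.continuous_iSup P hP hPbdd
  obtain ⟨s, C, -, hC⟩ := Seminorm.bound_of_continuous
    (D.withSeminorms_induced (withSeminorms_pi fun k => norm_withSeminorms ℝ (F k)))
    _ hsup
  classical
  refine ⟨C, C.coe_nonneg, s.image Sigma.fst, fun i v => ?_⟩
  refine (le_ciSup hPbdd i v).trans (hC v) |>.trans (mul_le_mul_of_nonneg_left ?_ C.coe_nonneg)
  refine Seminorm.finset_sup_apply_le (by positivity) fun k hk => ?_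
  exact single_le_sum (f := fun k => ‖D v k‖) (fun _ _ => norm_nonneg _) (mem_image_of_mem _ hk)

section PartialDerivatives

open Filter

open scoped ContDiff

variable {d : ℕ} {f : (Fin d → ℝ) → ℝ}

/-- The continuous linear functional with the given coordinates in the dual of the standard basis;
it turns a gradient into a Fréchet derivative. -/
noncomputable def covector (d : ℕ) : (Fin d → ℝ) →L[ℝ] (Fin d → ℝ) →L[ℝ] ℝ :=
  (Fintype.linearCombination ℝ fun i => ContinuousLinearMap.proj (φ := fun _ : Fin d => ℝ) i)
    |>.toContinuousLinearMap

theorem covector_single (a : Fin d → ℝ) (i : Fin d) : covector d a (Pi.single i 1) = a i := by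
  simp [covector, Fintype.linearCombination_apply, Pi.single_apply]

theorem fderiv_eq_covector_pderiv' (f : (Fin d → ℝ) → ℝ) (q : Fin d → ℝ) :
    fderiv ℝ f q = covector d fun i => pderiv' i f q := by
  refine ContinuousLinearMap.coe_injective (LinearMap.pi_ext' fun i => LinearMap.ext_ring ?_)
  simp [covector_single, pderiv']

theorem pderiv'_eq_of_hasFDerivAt {a q : Fin d → ℝ} (h : HasFDerivAt f (covector d a) q)
    (i : Fin d) : pderiv' i f q = a i := by
  rw [pderiv', h.fderiv, covector_single]

theorem hasFDerivAt_covector_of_tendstoUniformly {ι : Type*} {l : Filter ι} [NeBot l]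
    {u : ι → (Fin d → ℝ) → ℝ} {g : Fin d → (Fin d → ℝ) → ℝ} (hu : ∀ n, Differentiable ℝ (u n))
    (hf : TendstoUniformly u f l) (hg : ∀ i, TendstoUniformly (fun n => pderiv' i (u n)) (g i) l)
    (q : Fin d → ℝ) : HasFDerivAt f (covector d fun i => g i q) q := by
  refine hasFDerivAt_of_tendstoUniformly (f := u)
    (f' := fun n q => covector d fun i => pderiv' i (u n) q) (l := l)
    (g' := fun q => covector d fun i => g i q) ?_ (fun n q => ?_) (fun q => hf.tendsto_at q) q
  · refine (covector d).uniformContinuous.comp_tendstoUniformly (Metric.tendstoUniformly_iff.2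
      fun ε hε => ?_)
    filter_upwards [eventually_all.2 fun i => Metric.tendstoUniformly_iff.1 (hg i) ε hε] with n hn q
    exact (dist_pi_lt_iff hε).2 fun i => hn i q
  · rw [← fderiv_eq_covector_pderiv']
    exact (hu n q).hasFDerivAt

/-- A family of functions indexed by multi-indices that behaves like the iterated partial
derivatives of its member at the empty multi-index. -/
def IsDerivativeFamily (g : List (Fin d) → (Fin d → ℝ) → ℝ) : Prop :=
  ∀ l q, HasFDerivAt (g l) (covector d fun i => g (i :: l) q) q

namespace IsDerivativeFamily

variable {g : List (Fin d) → (Fin d → ℝ) → ℝ}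

theorem contDiff (hg : IsDerivativeFamily g) (l : List (Fin d)) : ContDiff ℝ ∞ (g l) := by
  refine contDiff_infty.2 fun n => ?_
  induction n generalizing l with
  | zero => exact contDiff_zero.2 (continuous_iff_continuousAt.2 fun q => (hg l q).continuousAt)
  | succ n ih =>
    rw [Nat.cast_succ]
    refine contDiff_succ_iff_fderiv.2 ⟨fun q => (hg l q).differentiableAt,
      fun h => absurd h (by simp), ?_⟩
    rw [funext fun q => (hg l q).fderiv]
    exact (covector d).contDiff.comp (contDiff_pi.2 fun i => ih (i :: l))

theorem iterPDeriv_nil_eq (hg : IsDerivativeFamily g) (l : List (Fin d)) :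
    iterPDeriv l (g []) = g l := by
  induction l with
  | nil => rfl
  | cons i l ih =>
    rw [iterPDeriv, ih]
    exact funext fun q => pderiv'_eq_of_hasFDerivAt (hg l q) i

end IsDerivativeFamily

theorem contDiff_pderiv' (hf : ContDiff ℝ ∞ f) (i : Fin d) : ContDiff ℝ ∞ (pderiv' i f) :=
  (contDiff_infty_iff_fderiv.1 hf).2.clm_apply contDiff_const

theorem contDiff_iterPDeriv (hf : ContDiff ℝ ∞ f) (l : List (Fin d)) :
    ContDiff ℝ ∞ (iterPDeriv l f) := by
  induction l with
  | nil => exact hf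
  | cons i l ih => exact contDiff_pderiv' ih i

theorem isDerivativeFamily_iterPDeriv (hf : ContDiff ℝ ∞ f) :
    IsDerivativeFamily fun l => iterPDeriv l f := fun l q => by
  have h := ((contDiff_iterPDeriv hf l).differentiable (by simp) q).hasFDerivAt
  rwa [fderiv_eq_covector_pderiv'] at h

theorem isDerivativeFamily_of_tendstoUniformly {ι : Type*} {L : Filter ι} [NeBot L]
    {u : ι → (Fin d → ℝ) → ℝ} {g : List (Fin d) → (Fin d → ℝ) → ℝ} (hu : ∀ n, ContDiff ℝ ∞ (u n))
    (hg : ∀ l, TendstoUniformly (fun n => iterPDeriv l (u n)) (g l) L) : IsDerivativeFamily g :=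
  fun l => hasFDerivAt_covector_of_tendstoUniformly
    (fun n => (contDiff_iterPDeriv (hu n) l).differentiable (by simp)) (hg l) fun i => hg (i :: l)

theorem IsDerivativeFamily.add {g g' : List (Fin d) → (Fin d → ℝ) → ℝ} (hg : IsDerivativeFamily g)
    (hg' : IsDerivativeFamily g') : IsDerivativeFamily (g + g') := fun l q =>
  ((hg l q).add (hg' l q)).congr_fderiv (map_add (covector d) _ _).symm

theorem IsDerivativeFamily.const_smul {g : List (Fin d) → (Fin d → ℝ) → ℝ}
    (hg : IsDerivativeFamily g) (c : ℝ) : IsDerivativeFamily (c • g) := fun l q =>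
  ((hg l q).const_smul c).congr_fderiv (map_smul (covector d) _ _).symm

theorem iterPDeriv_add {f' : (Fin d → ℝ) → ℝ} (hf : ContDiff ℝ ∞ f) (hf' : ContDiff ℝ ∞ f')
    (l : List (Fin d)) : iterPDeriv l (f + f') = iterPDeriv l f + iterPDeriv l f' :=
  ((isDerivativeFamily_iterPDeriv hf).add (isDerivativeFamily_iterPDeriv hf')).iterPDeriv_nil_eq l

theorem iterPDeriv_const_smul (hf : ContDiff ℝ ∞ f) (c : ℝ)
    (l : List (Fin d)) : iterPDeriv l (c • f) = c • iterPDeriv l f :=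
  ((isDerivativeFamily_iterPDeriv hf).const_smul c).iterPDeriv_nil_eq l

theorem zperiodic_pderiv' (hf : ZPeriodic f) (i : Fin d) : ZPeriodic (pderiv' i f) := fun q m => by
  have h : (fun x => f (x + fun i => (m i : ℝ))) = f := funext fun x => hf x m
  have := fderiv_comp_add_right (𝕜 := ℝ) (f := f) (x := q) (fun i => (m i : ℝ))
  rw [h] at this
  exact congrArg (· (Pi.single i 1)) this.symm

theorem zperiodic_iterPDeriv (hf : ZPeriodic f) (l : List (Fin d)) :
    ZPeriodic (iterPDeriv l f) := by
  induction l with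
  | nil => exact hf
  | cons i l ih => exact zperiodic_pderiv' ih i

end PartialDerivatives

section TorusFunctions

open Filter

open scoped ContDiff BoundedContinuousFunction

variable {d : ℕ} {φ ψ : Torus d → ℝ}

theorem Torus.isOpenQuotientMap_proj : IsOpenQuotientMap (Torus.proj (d := d)) :=
  IsOpenQuotientMap.piMap (f := fun (_ : Fin d) (x : ℝ) => (x : AddCircle (1 : ℝ)))
    fun _ => QuotientAddGroup.isOpenQuotientMap_mk

theorem Torus.proj_eq_proj_iff {x y : Fin d → ℝ} :
    Torus.proj x = Torus.proj y ↔ ∃ m : Fin d → ℤ, x = fun i => y i + m i := by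
  have hcoord (i : Fin d) :
      (x i : AddCircle (1 : ℝ)) = (y i : AddCircle (1 : ℝ)) ↔ ∃ n : ℤ, x i = y i + n := by
    rw [← sub_eq_zero, ← AddCircle.coe_sub, AddCircle.coe_eq_zero_iff]
    exact exists_congr fun n => by rw [zsmul_one, eq_comm, sub_eq_iff_eq_add']
  simp only [funext_iff, Torus.proj, hcoord, Classical.skolem]

theorem zperiodic_comp_proj (φ : Torus d → ℝ) : ZPeriodic fun q => φ (Torus.proj q) :=
  fun _ m => congrArg φ (Torus.proj_eq_proj_iff.2 ⟨m, rfl⟩)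

theorem ZPeriodic.exists_comp_proj {f : (Fin d → ℝ) → ℝ} (hf : ZPeriodic f) :
    ∃ φ : Torus d → ℝ, (fun q => φ (Torus.proj q)) = f := by
  have hfactors : Function.FactorsThrough f Torus.proj := fun x y hxy => by
    obtain ⟨m, rfl⟩ := Torus.proj_eq_proj_iff.1 hxy
    exact hf y m
  exact ⟨Function.extend Torus.proj f 0, funext (hfactors.extend_apply 0)⟩

theorem ZPeriodic.exists_abs_le {f : (Fin d → ℝ) → ℝ} (hf : ZPeriodic f) (hcont : Continuous f) :
    ∃ C, ∀ q, |f q| ≤ C := by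
  obtain ⟨φ, rfl⟩ := hf.exists_comp_proj
  have hφ : Continuous φ := Torus.isOpenQuotientMap_proj.isQuotientMap.continuous_iff.2 hcont
  obtain ⟨C, hC⟩ := isCompact_univ.exists_bound_of_continuousOn hφ.continuousOn
  exact ⟨C, fun q => hC _ trivial⟩

theorem BddMeas.integrable {X : Type*} [MeasurableSpace X] {φ : X → ℝ} (hφ : BddMeas φ)
    (μ : Measure X) [IsFiniteMeasure μ] : Integrable φ μ := by
  obtain ⟨C, hC⟩ := hφ.2
  exact .of_bound hφ.1.aestronglyMeasurable C (.of_forall hC)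

namespace TSmooth

theorem const (c : ℝ) : TSmooth fun _ : Torus d => c := contDiff_const

theorem add (hφ : TSmooth φ) (hψ : TSmooth ψ) : TSmooth fun x => φ x + ψ x := ContDiff.add hφ hψ

theorem sub (hφ : TSmooth φ) (hψ : TSmooth ψ) : TSmooth fun x => φ x - ψ x := ContDiff.sub hφ hψ

theorem mul (hφ : TSmooth φ) (hψ : TSmooth ψ) : TSmooth fun x => φ x * ψ x := ContDiff.mul hφ hψ

theorem const_mul (c : ℝ) (hφ : TSmooth φ) : TSmooth fun x => c * φ x := (const c).mul hφ

theorem continuous (hφ : TSmooth φ) : Continuous φ :=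
  Torus.isOpenQuotientMap_proj.isQuotientMap.continuous_iff.2 (ContDiff.continuous hφ)

theorem bddMeas (hφ : TSmooth φ) : BddMeas φ := by
  obtain ⟨C, hC⟩ := isCompact_univ.exists_bound_of_continuousOn hφ.continuous.continuousOn
  exact ⟨hφ.continuous.measurable, C, fun x => hC x trivial⟩

theorem integrable (hφ : TSmooth φ) (μ : Measure (Torus d)) [IsFiniteMeasure μ] :
    Integrable φ μ :=
  hφ.bddMeas.integrable μ

theorem exists_pos_forall_le (hφ : TSmooth φ) (hpos : ∀ x, 0 < φ x) :
    ∃ c, 0 < c ∧ ∀ x, c ≤ φ x := by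
  obtain ⟨x, -, hx⟩ :=
    isCompact_univ.exists_isMinOn Set.univ_nonempty hφ.continuous.continuousOn
  exact ⟨φ x, hpos x, fun y => hx (Set.mem_univ y)⟩

theorem exists_abs_iterPDeriv_le (hφ : TSmooth φ) (l : List (Fin d)) :
    ∃ C, ∀ q, |iterPDeriv l (fun q => φ (Torus.proj q)) q| ≤ C :=
  (zperiodic_iterPDeriv (zperiodic_comp_proj φ) l).exists_abs_le
    (contDiff_iterPDeriv hφ l).continuous

theorem abs_iterPDeriv_le_tcmNorm (hφ : TSmooth φ) {m : ℕ} {l : List (Fin d)} (hl : l.length ≤ m)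
    (q : Fin d → ℝ) : |iterPDeriv l (fun q => φ (Torus.proj q)) q| ≤ TCmNorm m φ := by
  choose C hC using hφ.exists_abs_iterPDeriv_le
  obtain ⟨M, hM⟩ := ((List.finite_length_le (Fin d) m).image C).bddAbove
  refine le_ciSup (f := fun p : {l : List (Fin d) // l.length ≤ m} × (Fin d → ℝ) =>
    |iterPDeriv p.1.1 (fun q => φ (Torus.proj q)) p.2|) ⟨M, ?_⟩ (⟨l, hl⟩, q)
  rintro _ ⟨⟨l, q⟩, rfl⟩
  exact (hC l.1 q).trans (hM ⟨l.1, l.2, rfl⟩)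

end TSmooth

/-- The space `S` of smooth functions on the torus. -/
def smoothFunctions (d : ℕ) : Submodule ℝ (Torus d → ℝ) where
  carrier := {φ | TSmooth φ}
  add_mem' hφ hψ := TSmooth.add hφ hψ
  zero_mem' := TSmooth.const 0
  smul_mem' c _ hφ := TSmooth.const_mul c hφ

/-- All the partial derivatives of a smooth function on the torus, as bounded continuous functions
on `ℝ^d`; the topology it induces on `smoothFunctions d` is the usual Fréchet topology. -/
noncomputable def partialDerivatives (d : ℕ) :
    smoothFunctions d →ₗ[ℝ] List (Fin d) → (Fin d → ℝ) →ᵇ ℝ where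
  toFun φ l := .ofNormedAddCommGroup (iterPDeriv l fun q => φ.1 (Torus.proj q))
    (contDiff_iterPDeriv φ.2 l).continuous _ (TSmooth.exists_abs_iterPDeriv_le φ.2 l).choose_spec
  map_add' φ ψ := by
    ext l q
    exact congrFun (iterPDeriv_add φ.2 ψ.2 l) q
  map_smul' c φ := by
    ext l q
    exact congrFun (iterPDeriv_const_smul φ.2 c l) q

theorem partialDerivatives_apply (φ : smoothFunctions d) (l : List (Fin d)) :
    ⇑(partialDerivatives d φ l) = iterPDeriv l fun q => φ.1 (Torus.proj q) := rfl

theorem abs_le_norm_partialDerivatives_nil (φ : smoothFunctions d) (x : Torus d) :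
    |φ.1 x| ≤ ‖partialDerivatives d φ []‖ := by
  obtain ⟨q, rfl⟩ := Torus.isOpenQuotientMap_proj.surjective x
  exact (partialDerivatives d φ []).norm_coe_le_norm q

theorem partialDerivatives_injective : Function.Injective (partialDerivatives d) := by
  refine (injective_iff_map_eq_zero _).2 fun φ hφ => Subtype.ext (funext fun x => ?_)
  simpa [hφ] using abs_le_norm_partialDerivatives_nil φ x

theorem isClosed_range_partialDerivatives : IsClosed (Set.range (partialDerivatives d)) := by
  refine IsSeqClosed.isClosed fun u g hu hug => ?_
  choose φ hφ using hu
  have hlim (l : List (Fin d)) : TendstoUniformly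
      (fun n => iterPDeriv l fun q => (φ n).1 (Torus.proj q)) (g l) atTop := by
    have := BoundedContinuousFunction.tendsto_iff_tendstoUniformly.1 (tendsto_pi_nhds.1 hug l)
    simpa only [← hφ, partialDerivatives_apply] using this
  have hg : IsDerivativeFamily fun l => g l :=
    isDerivativeFamily_of_tendstoUniformly (fun n => (φ n).2) hlim
  have hper : ZPeriodic (g []) := fun q m => tendsto_nhds_unique ((hlim []).tendsto_at _)
    (((hlim []).tendsto_at q).congr fun n => (zperiodic_comp_proj (φ n).1 q m).symm)
  obtain ⟨φ₀, hφ₀⟩ := hper.exists_comp_proj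
  have hsm : TSmooth φ₀ := by
    rw [TSmooth, hφ₀]
    exact hg.contDiff []
  refine ⟨⟨φ₀, hsm⟩, funext fun l => DFunLike.coe_injective ?_⟩
  rw [partialDerivatives_apply, hφ₀]
  exact hg.iterPDeriv_nil_eq l

theorem norm_partialDerivatives_le_tcmNorm (φ : smoothFunctions d) {m : ℕ} {l : List (Fin d)}
    (hl : l.length ≤ m) : ‖partialDerivatives d φ l‖ ≤ TCmNorm m φ.1 :=
  BoundedContinuousFunction.norm_le_of_nonempty.2 (TSmooth.abs_iterPDeriv_le_tcmNorm φ.2 hl)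

end TorusFunctions

section Functionals

open Asymptotics

variable {d : ℕ}

theorem exists_forall_abs_le_mul_tcmNorm {ι : Type*} (L : ι → smoothFunctions d →ₗ[ℝ] ℝ)
    (hbdd : ∀ i, ∃ l, ∃ C : ℝ, ∀ φ, |L i φ| ≤ C * ‖partialDerivatives d φ l‖) {r : ι → ℝ}
    (hr : ∀ i, 0 < r i) (hO : ∀ φ, (fun i => L i φ) =O[⊤] r) :
    ∃ C : ℝ, 0 < C ∧ ∃ m : ℕ, ∀ i (φ : smoothFunctions d), |L i φ| ≤ C * r i * TCmNorm m φ.1 := by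
  have hscaled (i : ι) (φ : smoothFunctions d) : |((r i)⁻¹ • L i) φ| = (r i)⁻¹ * |L i φ| := by
    rw [LinearMap.smul_apply, smul_eq_mul, abs_mul, abs_of_pos (inv_pos.2 (hr i))]
  obtain ⟨C, hC, s, hs⟩ := exists_abs_le_sum_norm_of_isClosed_range (partialDerivatives d)
    partialDerivatives_injective isClosed_range_partialDerivatives (fun i => (r i)⁻¹ • L i)
    (fun i => by
      obtain ⟨l, C, hC⟩ := hbdd i
      refine ⟨l, (r i)⁻¹ * C, fun φ => ?_⟩
      rw [hscaled, mul_assoc]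
      exact mul_le_mul_of_nonneg_left (hC φ) (inv_pos.2 (hr i)).le)
    (fun φ => by
      obtain ⟨C, hC⟩ := isBigO_top.1 (hO φ)
      refine ⟨C, fun i => ?_⟩
      rw [hscaled, inv_mul_le_iff₀ (hr i), mul_comm (r i)]
      simpa only [Real.norm_eq_abs, abs_of_pos (hr i)] using hC i)
  refine ⟨C * #s + 1, by positivity, s.sup List.length, fun i φ => ?_⟩
  have hsum : ∑ l ∈ s, ‖partialDerivatives d φ l‖ ≤ #s * TCmNorm (s.sup List.length) φ.1 := by
    simpa only [nsmul_eq_mul] using sum_le_card_nsmul s _ _ fun l hl =>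
      norm_partialDerivatives_le_tcmNorm φ (le_sup (f := List.length) hl)
  have hnonneg : 0 ≤ TCmNorm (s.sup List.length) φ.1 :=
    (norm_nonneg _).trans (norm_partialDerivatives_le_tcmNorm φ (l := []) (Nat.zero_le _))
  have hle := (hs i φ).trans (mul_le_mul_of_nonneg_left hsum hC)
  rw [hscaled, inv_mul_le_iff₀ (hr i)] at hle
  nlinarith [mul_nonneg (hr i).le hnonneg]

/-- The functional `φ ↦ ∫ φ w dμ` on smooth functions. -/
noncomputable def weightedIntegral (μ : Measure (Torus d)) [IsFiniteMeasure μ] {w : Torus d → ℝ}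
    (hw : TSmooth w) : smoothFunctions d →ₗ[ℝ] ℝ where
  toFun φ := ∫ x, φ.1 x * w x ∂μ
  map_add' φ ψ := by
    simpa only [Submodule.coe_add, Pi.add_apply, add_mul] using
      integral_add ((TSmooth.mul φ.2 hw).integrable μ) ((TSmooth.mul ψ.2 hw).integrable μ)
  map_smul' c φ := by
    simpa only [Submodule.coe_smul, Pi.smul_apply, smul_eq_mul, mul_assoc, RingHom.id_apply]
      using integral_const_mul c fun x => φ.1 x * w x

theorem abs_weightedIntegral_le (μ : Measure (Torus d)) [IsFiniteMeasure μ] {w : Torus d → ℝ}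
    (hw : TSmooth w) (φ : smoothFunctions d) :
    |weightedIntegral μ hw φ| ≤ (∫ x, |w x| ∂μ) * ‖partialDerivatives d φ []‖ := by
  rw [← integral_mul_const]
  refine norm_integral_le_of_norm_le (f := fun x => φ.1 x * w x)
    ((hw.integrable μ).abs.mul_const _) (.of_forall fun x => ?_)
  rw [norm_mul, mul_comm]
  exact mul_le_mul_of_nonneg_left (abs_le_norm_partialDerivatives_nil φ x) (abs_nonneg _)

theorem integral_add_mul_mul_eq {μ : Measure (Torus d)} [IsFiniteMeasure μ]
    {u v w Au Av : Torus d → ℝ} (hu : TSmooth u) (hv : TSmooth v) (hw : TSmooth w)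
    (hAu : TSmooth Au) (hAv : TSmooth Av) (hadj : ∫ x, Au x * v x ∂μ = ∫ x, u x * Av x ∂μ) :
    ∫ x, (Au x + w x * u x) * v x ∂μ = ∫ x, u x * (Av x + w x * v x) ∂μ := by
  have hwuv := ((hw.mul hu).mul hv).integrable μ
  calc ∫ x, (Au x + w x * u x) * v x ∂μ
      = ∫ x, Au x * v x ∂μ + ∫ x, w x * u x * v x ∂μ := by
        simp only [add_mul, integral_add ((hAu.mul hv).integrable μ) hwuv]
    _ = ∫ x, (u x * Av x + w x * u x * v x) ∂μ := by
        rw [hadj, integral_add ((hu.mul hAv).integrable μ) hwuv]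
    _ = ∫ x, u x * (Av x + w x * v x) ∂μ := by congr! 2; ring

end Functionals

section Stationarity

theorem FixedPt.abs_defect_mul_integral_sub_sum_le {X ι : Type*} [MeasurableSpace X]
    {κ : Kernel X X} {μ : Measure X} [IsProbabilityMeasure μ] (hfix : FixedPt κ μ) {ψ : X → ℝ}
    (hψ : BddMeas ψ) (hQψ : Integrable (evolOp κ ψ) μ) {s : Finset ι} {g : ι → X → ℝ}
    (hg : ∀ k ∈ s, Integrable (g k) μ) (a b : ι → ℝ) {C : ℝ}
    (hexp : ∀ q, |evolOp κ ψ q - ψ q - ∑ k ∈ s, b k * g k q| ≤ C) :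
    |(∫ q, evolOp κ (fun _ => 1) q ∂μ - 1 - ∑ k ∈ s, b k * a k) * ∫ q, ψ q ∂μ
      - ∑ k ∈ s, b k * ∫ q, g k q - a k * ψ q ∂μ| ≤ C := by
  have hψint := hψ.integrable μ
  have hsum : Integrable (fun q => ∑ k ∈ s, b k * g k q) μ :=
    integrable_finsetSum s fun k hk => (hg k hk).const_mul _
  have hmean : ∫ q, evolOp κ ψ q - ψ q - ∑ k ∈ s, b k * g k q ∂μ
      = (∫ q, evolOp κ (fun _ => 1) q ∂μ - 1) * ∫ q, ψ q ∂μ - ∑ k ∈ s, b k * ∫ q, g k q ∂μ := by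
    have hdiff : Integrable (fun q => evolOp κ ψ q - ψ q) μ := hQψ.sub hψint
    rw [integral_sub hdiff hsum, integral_sub hQψ hψint, hfix ψ hψ,
      integral_finsetSum s fun k hk => (hg k hk).const_mul _]
    simp only [integral_const_mul]
    ring
  have hcentered : ∑ k ∈ s, b k * ∫ q, g k q - a k * ψ q ∂μ
      = ∑ k ∈ s, b k * ∫ q, g k q ∂μ - (∑ k ∈ s, b k * a k) * ∫ q, ψ q ∂μ := by
    rw [sum_mul, ← sum_sub_distrib]
    refine sum_congr rfl fun k hk => ?_
    rw [integral_sub (hg k hk) (hψint.const_mul _), integral_const_mul]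
    ring
  calc _ = |∫ q, evolOp κ ψ q - ψ q - ∑ k ∈ s, b k * g k q ∂μ| := by
        rw [hmean, hcentered]
        congr 1
        ring
    _ ≤ C := by
        simpa using norm_integral_le_of_norm_le_const (μ := μ)
          (f := fun q => evolOp κ ψ q - ψ q - ∑ k ∈ s, b k * g k q) (.of_forall hexp)

end Stationarity

section InvariantMeasures

open Asymptotics

variable {d p : ℕ} {ν : Measure (Torus d)} [IsFiniteMeasure ν] {h : Torus d → ℝ}

theorem exists_forall_abs_integral_error_le {ι : Type*} {μ : ι → Measure (Torus d)}
    [∀ i, IsFiniteMeasure (μ i)] (hh : TSmooth h) {f : Torus d → ℝ} (hf : TSmooth f) {s r : ι → ℝ}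
    (hr : ∀ i, 0 < r i)
    (hO : ∀ φ, TSmooth φ → (fun i =>
      ∫ x, φ x ∂μ i - ∫ x, φ x * h x ∂ν - s i * ∫ x, φ x * f x ∂ν) =O[⊤] r) :
    ∃ C : ℝ, 0 < C ∧ ∃ m : ℕ, ∀ i φ, TSmooth φ →
      |∫ x, φ x ∂μ i - ∫ x, φ x * h x ∂ν - s i * ∫ x, φ x * f x ∂ν|
        ≤ C * r i * TCmNorm m φ := by
  let L (i : ι) : smoothFunctions d →ₗ[ℝ] ℝ :=
    weightedIntegral (μ i) (TSmooth.const 1) - weightedIntegral ν hh - s i • weightedIntegral ν hf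
  have hL (i : ι) (φ : smoothFunctions d) : L i φ =
      ∫ x, φ.1 x ∂μ i - ∫ x, φ.1 x * h x ∂ν - s i * ∫ x, φ.1 x * f x ∂ν := by
    simp [L, weightedIntegral]
  have hbdd (i : ι) : ∃ l, ∃ C : ℝ, ∀ φ, |L i φ| ≤ C * ‖partialDerivatives d φ l‖ := by
    refine ⟨[], ∫ _, |1| ∂μ i + ∫ x, |h x| ∂ν + |s i| * ∫ x, |f x| ∂ν, fun φ => ?_⟩
    calc |L i φ| ≤ |weightedIntegral (μ i) (TSmooth.const 1) φ| + |weightedIntegral ν hh φ|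
          + |s i| * |weightedIntegral ν hf φ| := by
          rw [← abs_mul]
          exact (abs_sub _ _).trans (add_le_add_left (abs_sub _ _) _)
      _ ≤ _ := by
          simp only [add_mul, mul_assoc]
          gcongr <;> exact abs_weightedIntegral_le _ _ φ
  obtain ⟨C, hC, m, hm⟩ := exists_forall_abs_le_mul_tcmNorm L hbdd hr
    fun φ => by simpa only [hL] using hO φ.1 φ.2
  exact ⟨C, hC, m, fun i φ hφ => by simpa only [hL] using hm i ⟨φ, hφ⟩⟩

theorem one_isBigO_integral {ι : Type*} (μ : ι → Measure (Torus d))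
    [∀ i, IsProbabilityMeasure (μ i)] {φ : Torus d → ℝ} (hφ : TSmooth φ) (hpos : ∀ x, 0 < φ x) :
    (1 : ι → ℝ) =O[⊤] fun i => ∫ x, φ x ∂μ i := by
  obtain ⟨c, hc, hcφ⟩ := hφ.exists_pos_forall_le hpos
  refine isBigO_top.2 ⟨c⁻¹, fun i => ?_⟩
  have hle : c ≤ ∫ x, φ x ∂μ i := by
    simpa using integral_mono (integrable_const c) (hφ.integrable (μ i)) hcφ
  rw [Pi.one_apply, norm_one, Real.norm_of_nonneg (hc.le.trans hle), inv_mul_eq_div]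
  exact (one_le_div hc).2 hle

theorem integral_mul_pos {φ : Torus d → ℝ} (hφ : TSmooth φ) (hpos : ∀ x, 0 < φ x) (hh : TSmooth h)
    (hnonneg : ∀ x, 0 ≤ h x) (hmass : 0 < ∫ x, h x ∂ν) : 0 < ∫ x, φ x * h x ∂ν := by
  obtain ⟨c, hc, hcφ⟩ := hφ.exists_pos_forall_le hpos
  calc 0 < c * ∫ x, h x ∂ν := mul_pos hc hmass
    _ = ∫ x, c * h x ∂ν := (integral_const_mul c _).symm
    _ ≤ ∫ x, φ x * h x ∂ν := integral_mono ((hh.const_mul c).integrable ν)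
        ((hφ.mul hh).integrable ν) fun x => mul_le_mul_of_nonneg_right (hcφ x) (hnonneg x)

theorem integral_sub_integral_mul_eq {φ v : Torus d → ℝ} (hφ : TSmooth φ) (hv : TSmooth v)
    (hh : TSmooth h) : ∫ x, (φ x - ∫ y, φ y * h y ∂ν) * v x ∂ν
      = ∫ x, φ x * (v x - (∫ y, v y ∂ν) * h x) ∂ν := by
  have hφv := (hφ.mul hv).integrable ν
  simp only [sub_mul, mul_sub, mul_left_comm (φ _)]
  rw [integral_sub hφv ((hv.integrable ν).const_mul _),
    integral_sub hφv (((hφ.mul hh).integrable ν).const_mul _), integral_const_mul,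
    integral_const_mul, mul_comm]

theorem integral_centered_eq_neg {u v g Au Av Bu Bh W : Torus d → ℝ} {lam r : ℝ} (hu : TSmooth u)
    (hv : TSmooth v) (hh : TSmooth h) (hW : TSmooth W) (hAu : TSmooth Au) (hAv : TSmooth Av)
    (hBu : TSmooth Bu) (hBh : TSmooth Bh) (hA : ∫ x, Au x * v x ∂ν = ∫ x, u x * Av x ∂ν)
    (hB : ∫ x, Bu x * h x ∂ν = ∫ x, u x * Bh x ∂ν)
    (hueq : ∀ x, Au x + W x * u x - lam * u x = g x)
    (hveq : ∀ x, Av x + W x * v x - lam * v x = -Bh x + h x * r) :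
    ∫ x, (Bu x - r * u x) * h x ∂ν = -∫ x, g x * v x ∂ν := by
  have hAdual := integral_add_mul_mul_eq hu hv (hW.sub (.const lam)) hAu hAv hA
  have hBdual := integral_add_mul_mul_eq hu hh (.const (-r)) hBu hBh hB
  calc ∫ x, (Bu x - r * u x) * h x ∂ν = ∫ x, u x * (Bh x + -r * h x) ∂ν := by
        rw [← hBdual]
        congr! 2
        ring
    _ = ∫ x, -(u x * (Av x + (W x - lam) * v x)) ∂ν := by
        congr! 2 with x
        linear_combination u x * hveq x
    _ = -∫ x, g x * v x ∂ν := by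
        rw [integral_neg, ← hAdual]
        refine congrArg Neg.neg (integral_congr_ae (.of_forall fun x => ?_))
        linear_combination v x * hueq x

theorem isStationaryExpansion_integral {Δt0 : ℝ} {κ : ℝ → Kernel (Torus d) (Torus d)}
    {μ : ℝ → Measure (Torus d)} {A : ℕ → (Torus d → ℝ) → Torus d → ℝ} {a : ℕ → ℝ}
    (hA : ∀ k ∈ Icc 1 (p + 1), ∀ φ, TSmooth φ → TSmooth (A k φ))
    (hQ : ∀ t ∈ Set.Ioc 0 Δt0, ∀ φ, TSmooth φ → TSmooth (evolOp (κ t) φ))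
    (hμ : ∀ t ∈ Set.Ioc 0 Δt0, IsProbabilityMeasure (μ t) ∧ FixedPt (κ t) (μ t))
    (hexp : ∃ (c : ℝ) (m : ℕ), ∀ t ∈ Set.Ioc 0 Δt0, ∀ φ, TSmooth φ → ∀ q,
      |evolOp (κ t) φ q - φ q - ∑ k ∈ Icc 1 (p + 1), t ^ k * A k φ q|
        ≤ c * t ^ (p + 2) * TCmNorm m φ)
    (hh : TSmooth h) (hinv : ∀ k ∈ Icc 1 p, ∀ φ, TSmooth φ →
      ∫ x, A k φ x * h x ∂ν = a k * ∫ x, φ x * h x ∂ν) :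
    IsStationaryExpansion ⊤ (Subtype.val : Set.Ioc 0 Δt0 → ℝ) p {φ | TSmooth φ}
      (fun t φ => ∫ x, φ x ∂μ t)
      (fun t => ∫ x, evolOp (κ t) (fun _ => 1) x ∂μ t - 1 - ∑ k ∈ Icc 1 (p + 1), (t : ℝ) ^ k * a k)
      (fun k φ x => A k φ x - a k * φ x) (fun φ => ∫ x, φ x * h x ∂ν) where
  isBigO_param := isBigO_top.2 ⟨Δt0, fun t => by
    simpa [abs_of_pos t.2.1] using t.2.2⟩
  param_ne_zero := .of_forall fun t => t.2.1.ne'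
  map_mem k hk ψ hψ := (hA k hk ψ hψ).sub (TSmooth.const_mul _ hψ)
  isBigO_one ψ hψ := by
    obtain ⟨C, hC⟩ := (TSmooth.bddMeas hψ).2
    refine isBigO_top.2 ⟨C, fun t => ?_⟩
    have := (hμ t t.2).1
    simpa using norm_integral_le_of_norm_le_const (μ := μ t) (f := ψ) (.of_forall hC)
  isBigO_stationary ψ hψ := by
    obtain ⟨c, m, hc⟩ := hexp
    refine isBigO_top.2 ⟨c * TCmNorm m ψ, fun t => ?_⟩
    have := (hμ t t.2).1
    rw [norm_pow, Real.norm_of_nonneg t.2.1.le, mul_right_comm]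
    exact (hμ t t.2).2.abs_defect_mul_integral_sub_sum_le (TSmooth.bddMeas hψ)
      ((hQ t t.2 ψ hψ).integrable _) (fun k hk => (hA k hk ψ hψ).integrable _) a (t.1 ^ ·)
      (hc t t.2 ψ hψ)
  limit_eq_zero k hk ψ hψ := by
    have hAψ : TSmooth (A k ψ) := hA k (Icc_subset_Icc_right p.le_succ hk) ψ hψ
    simp only [sub_mul, mul_assoc]
    rw [integral_sub ((hAψ.mul hh).integrable ν) (((TSmooth.mul hψ hh).integrable ν).const_mul _),
      integral_const_mul, hinv k hk ψ hψ, sub_self]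

end InvariantMeasures

section ErrorEstimate

open Asymptotics

variable {d p : ℕ} {ν : Measure (Torus d)}

theorem integral_sub_div_mul_mul_eq_zero [IsFiniteMeasure ν] {φ ψ h : Torus d → ℝ}
    (hφ : TSmooth φ) (hψ : TSmooth ψ) (hh : TSmooth h) (hne : ∫ x, φ x * h x ∂ν ≠ 0) :
    ∫ x, (ψ x - (∫ y, ψ y * h y ∂ν) / (∫ y, φ y * h y ∂ν) * φ x) * h x ∂ν = 0 := by
  simp only [sub_mul, mul_assoc]
  rw [integral_sub ((hψ.mul hh).integrable ν) (((hφ.mul hh).integrable ν).const_mul _),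
    integral_const_mul, div_mul_cancel₀ _ hne, sub_self]

theorem isBigO_integral_error {ι : Type*} {t : ι → ℝ} {μ : ι → Measure (Torus d)}
    [∀ i, IsProbabilityMeasure (μ i)] {D : ι → ℝ} {A : ℕ → (Torus d → ℝ) → Torus d → ℝ}
    {a : ℕ → ℝ} {e f h : Torus d → ℝ}
    (hst : IsStationaryExpansion ⊤ t p {φ | TSmooth φ} (fun i φ => ∫ x, φ x ∂μ i) D
      (fun k φ x => A k φ x - a k * φ x) (fun φ => ∫ x, φ x * h x ∂ν))
    (hp : 1 ≤ p) (he : TSmooth e) (hepos : ∀ x, 0 < e x) (heig : ∀ x, A 1 e x = a 1 * e x)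
    (hlast : ∫ x, (A (p + 1) e x - a (p + 1) * e x) * h x ∂ν = 0)
    (hpoisson : ∀ φ, TSmooth φ → ∃ u, TSmooth u ∧
      (∀ x, A 1 u x - a 1 * u x = φ x - ∫ y, φ y * h y ∂ν) ∧
      ∫ x, (A (p + 1) u x - a (p + 1) * u x) * h x ∂ν = -∫ x, φ x * f x ∂ν)
    {φ : Torus d → ℝ} (hφ : TSmooth φ) :
    (fun i => ∫ x, φ x ∂μ i - ∫ x, φ x * h x ∂ν - t i ^ p * ∫ x, φ x * f x ∂ν)
      =O[⊤] fun i => t i ^ (p + 1) := by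
  have hsolve : ∀ φ, TSmooth φ → ∃ u, TSmooth u ∧
      (∀ i, ∫ x, A 1 u x - a 1 * u x ∂μ i = ∫ x, φ x ∂μ i - ∫ x, φ x * h x ∂ν) ∧
      ∫ x, (A (p + 1) u x - a (p + 1) * u x) * h x ∂ν = -∫ x, φ x * f x ∂ν := fun φ hφ => by
    obtain ⟨u, hu, hueq, hudual⟩ := hpoisson φ hφ
    exact ⟨u, hu, fun i => by simp [hueq, integral_sub (hφ.integrable _)], hudual⟩
  obtain ⟨u, hu, hueq, hudual⟩ := hsolve φ hφ
  refine (hst.isBigO_error_add_last hp he (one_isBigO_integral μ he hepos)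
    (fun i => by simp [heig]) hlast (fun φ hφ => ?_) hu hueq).congr_left fun i => ?_
  · obtain ⟨u, hu, hueq, -⟩ := hsolve φ hφ
    exact ⟨u, hu, hueq⟩
  · rw [hudual, mul_neg, ← sub_eq_add_neg]

theorem invariant_measure_error_estimate_general
    (d p : ℕ) (hp : 1 ≤ p)
    (W : Torus d → ℝ) (hWsm : TSmooth W)
    (ν : Measure (Torus d)) [IsFiniteMeasure ν]
    (lam : ℝ)
    (hWhat hWfun : Torus d → ℝ)
    (hhatS : TSmooth hWhat) (hhatpos : ∀ x, 0 < hWhat x)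
    (hfunS : TSmooth hWfun) (hfunpos : ∀ x, 0 < hWfun x) (hfunnorm : ∫ x, hWfun x ∂ν = 1)
    (A1 : (Torus d → ℝ) → Torus d → ℝ) (At : ℕ → (Torus d → ℝ) → Torus d → ℝ)
    (hAt1 : ∀ φ x, At 1 φ x = A1 φ x + W x * φ x)
    (hA1map : ∀ φ, TSmooth φ → TSmooth (A1 φ))
    (hAtmap : ∀ k ∈ Icc 2 (p + 1), ∀ φ, TSmooth φ → TSmooth (At k φ))
    (A1star : (Torus d → ℝ) → Torus d → ℝ)
    (hA1starmap : ∀ φ, TSmooth φ → TSmooth (A1star φ))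
    (hA1staradj : ∀ φ ψ, TSmooth φ → TSmooth ψ →
      ∫ x, A1 φ x * ψ x ∂ν = ∫ x, φ x * A1star ψ x ∂ν)
    (Atp1star : (Torus d → ℝ) → Torus d → ℝ)
    (hAtp1starmap : ∀ φ, TSmooth φ → TSmooth (Atp1star φ))
    (hAtp1staradj : ∀ φ ψ, TSmooth φ → TSmooth ψ →
      ∫ x, At (p + 1) φ x * ψ x ∂ν = ∫ x, φ x * Atp1star ψ x ∂ν)
    (Δt0 : ℝ)
    (κ : ℝ → Kernel (Torus d) (Torus d))
    (hQS : ∀ Δt ∈ Set.Ioc 0 Δt0, ∀ φ, TSmooth φ → TSmooth (evolOp (κ Δt) φ))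
    (νd : ℝ → Measure (Torus d))
    (hνd : ∀ Δt ∈ Set.Ioc 0 Δt0, IsProbabilityMeasure (νd Δt) ∧ FixedPt (κ Δt) (νd Δt))
    (hexp : ∃ (c : ℝ) (m : ℕ), ∀ Δt ∈ Set.Ioc 0 Δt0, ∀ φ, TSmooth φ → ∀ q,
      |evolOp (κ Δt) φ q - φ q - ∑ k ∈ Icc 1 (p + 1), Δt ^ k * At k φ q|
        ≤ c * Δt ^ (p + 2) * TCmNorm m φ)
    (hstab : ∀ g, TSmooth g → ∫ x, g x * hWfun x ∂ν = 0 →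
      ∃ u, TSmooth u ∧ ∀ x, A1 u x + W x * u x - lam * u x = g x)
    (hspec : ∀ x, A1 hWhat x + W x * hWhat x = lam * hWhat x)
    (hinv : ∀ k ∈ Icc 1 p, ∃ a : ℝ, ∀ φ, TSmooth φ →
      ∫ x, At k φ x * hWfun x ∂ν = a * ∫ x, φ x * hWfun x ∂ν)
    (v : Torus d → ℝ) (hvS : TSmooth v)
    (hveq : ∀ x, A1star v x + W x * v x - lam * v x =
      -(Atp1star hWfun x) + hWfun x *
        ((∫ y, At (p + 1) hWhat y * hWfun y ∂ν) / (∫ y, hWhat y * hWfun y ∂ν))) :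
    ∃ C : ℝ, 0 < C ∧ ∃ m : ℕ, ∀ Δt ∈ Set.Ioc 0 Δt0, ∀ φ, TSmooth φ →
      |∫ x, φ x ∂(νd Δt) - ∫ x, φ x * hWfun x ∂ν
          - Δt ^ p * ∫ x, φ x * (v x / hWfun x - ∫ y, v y ∂ν) * hWfun x ∂ν|
        ≤ C * Δt ^ (p + 1) * TCmNorm m φ := by
  have hA (k) (hk : k ∈ Icc 1 (p + 1)) (φ) (hφ : TSmooth φ) : TSmooth (At k φ) := by
    obtain rfl | hk1 := eq_or_ne k 1
    · exact funext (hAt1 φ) ▸ (hA1map φ hφ).add (hWsm.mul hφ)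
    · exact hAtmap k (by grind) φ hφ
  have hne : ∫ x, hWhat x * hWfun x ∂ν ≠ 0 :=
    (integral_mul_pos hhatS hhatpos hfunS (fun x => (hfunpos x).le) (by simp [hfunnorm])).ne'
  let a (k : ℕ) : ℝ := (∫ x, At k hWhat x * hWfun x ∂ν) / ∫ x, hWhat x * hWfun x ∂ν
  have ha (k) (hk : k ∈ Icc 1 p) (φ) (hφ : TSmooth φ) :
      ∫ x, At k φ x * hWfun x ∂ν = a k * ∫ x, φ x * hWfun x ∂ν := by
    obtain ⟨b, hb⟩ := hinv k hk
    rw [hb φ hφ, show a k = b by simp [a, hb hWhat hhatS, hne]]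
  have ha1 : a 1 = lam := by simp [a, hAt1, hspec, mul_assoc, integral_const_mul, hne]
  have hst := isStationaryExpansion_integral hA hQS hνd hexp hfunS ha
  have hpoisson (φ) (hφ : TSmooth φ) : ∃ u, TSmooth u ∧
      (∀ x, At 1 u x - a 1 * u x = φ x - ∫ y, φ y * hWfun y ∂ν) ∧
      ∫ x, (At (p + 1) u x - a (p + 1) * u x) * hWfun x ∂ν
        = -∫ x, φ x * (v x - (∫ y, v y ∂ν) * hWfun x) ∂ν := by
    obtain ⟨u, hu, hueq⟩ := hstab _ (hφ.sub (.const (∫ y, φ y * hWfun y ∂ν)))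
      (by simp [integral_sub_integral_mul_eq hφ hfunS hfunS, hfunnorm])
    refine ⟨u, hu, fun x => by rw [hAt1, ha1, hueq], ?_⟩
    rw [← integral_sub_integral_mul_eq hφ hvS hfunS]
    exact integral_centered_eq_neg hu hvS hfunS hWsm (hA1map u hu) (hA1starmap v hvS)
      (hA (p + 1) (by simp) u hu) (hAtp1starmap _ hfunS) (hA1staradj u v hu hvS)
      (hAtp1staradj u _ hu hfunS) hueq hveq
  have (t : Set.Ioc 0 Δt0) : IsProbabilityMeasure (νd t) := (hνd t t.2).1
  obtain ⟨C, hC, m, hm⟩ := exists_forall_abs_integral_error_le hfunS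
    (hvS.sub (hfunS.const_mul (∫ y, v y ∂ν)))
    (fun t : Set.Ioc 0 Δt0 => pow_pos t.2.1 (p + 1)) fun φ hφ =>
      isBigO_integral_error hst hp hhatS hhatpos (fun x => by rw [hAt1, hspec, ha1])
        (integral_sub_div_mul_mul_eq_zero hhatS (hA (p + 1) (by simp) _ hhatS) hfunS hne)
        hpoisson hφ
  have hdensity (x) : (v x / hWfun x - ∫ y, v y ∂ν) * hWfun x
      = v x - (∫ y, v y ∂ν) * hWfun x := by
    rw [sub_mul, div_mul_cancel₀ _ (hfunpos x).ne']
  simp only [mul_assoc, hdensity] at hm ⊢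
  exact ⟨C, hC, m, fun t ht φ hφ => hm ⟨t, ht⟩ φ hφ⟩

end ErrorEstimate

/-- Error estimate à la Talay–Tubaro on the invariant probability measure of discretized
Feynman–Kac semigroups: `∫φ dν_{W,Δt} = ∫φ dν_W + Δt^p ∫φ f dν_W + O(Δt^{p+1})`. -/
theorem invariant_measure_error_estimate
    (d p : ℕ) (hd : 1 ≤ d) (hp : 1 ≤ p)
    (W : Torus d → ℝ) (hWsm : TSmooth W)
    (ν : Measure (Torus d)) (hνprob : IsProbabilityMeasure ν)
    (ρ : (Fin d → ℝ) → ℝ) (hρsm : ContDiff ℝ (⊤ : ℕ∞) ρ) (hρper : ZPeriodic ρ)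
    (hρpos : ∀ x, 0 < ρ x)
    (hνρ : ∀ φ : Torus d → ℝ, BddMeas φ →
      ∫ x, φ x ∂ν = ∫ x in unitCube d, φ (Torus.proj x) * ρ x)
    (lam : ℝ)
    (hWhat hWfun : Torus d → ℝ)
    (hhatS : TSmooth hWhat) (hhatpos : ∀ x, 0 < hWhat x) (hhatnorm : ∫ x, hWhat x ∂ν = 1)
    (hfunS : TSmooth hWfun) (hfunpos : ∀ x, 0 < hWfun x) (hfunnorm : ∫ x, hWfun x ∂ν = 1)
    (A1 : (Torus d → ℝ) → Torus d → ℝ) (At : ℕ → (Torus d → ℝ) → Torus d → ℝ)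
    (hAt1 : ∀ φ x, At 1 φ x = A1 φ x + W x * φ x)
    (hA1one : ∀ x, A1 (fun _ => (1:ℝ)) x = 0)
    (hA1map : ∀ φ, TSmooth φ → TSmooth (A1 φ))
    (hA1add : ∀ φ ψ, TSmooth φ → TSmooth ψ → A1 (φ + ψ) = A1 φ + A1 ψ)
    (hA1smul : ∀ (c : ℝ) (φ), TSmooth φ → A1 (c • φ) = c • A1 φ)
    (hA1bdd : ∃ c : ℝ, 0 ≤ c ∧ ∃ m : ℕ, ∀ φ, TSmooth φ → ∀ x, |A1 φ x| ≤ c * TCmNorm m φ)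
    (hAtmap : ∀ k ∈ Finset.Icc 2 (p + 1), ∀ φ, TSmooth φ → TSmooth (At k φ))
    (hAtadd : ∀ k ∈ Finset.Icc 2 (p + 1), ∀ φ ψ, TSmooth φ → TSmooth ψ →
      At k (φ + ψ) = At k φ + At k ψ)
    (hAtsmul : ∀ k ∈ Finset.Icc 2 (p + 1), ∀ (c : ℝ) (φ), TSmooth φ →
      At k (c • φ) = c • At k φ)
    (hAtbdd : ∀ k ∈ Finset.Icc 2 (p + 1), ∃ c : ℝ, 0 ≤ c ∧ ∃ m : ℕ,
      ∀ φ, TSmooth φ → ∀ x, |At k φ x| ≤ c * TCmNorm m φ)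
    (A1star : (Torus d → ℝ) → Torus d → ℝ)
    (hA1starmap : ∀ φ, TSmooth φ → TSmooth (A1star φ))
    (hA1staradj : ∀ φ ψ, TSmooth φ → TSmooth ψ →
      ∫ x, A1 φ x * ψ x ∂ν = ∫ x, φ x * A1star ψ x ∂ν)
    (Atp1star : (Torus d → ℝ) → Torus d → ℝ)
    (hAtp1starmap : ∀ φ, TSmooth φ → TSmooth (Atp1star φ))
    (hAtp1staradj : ∀ φ ψ, TSmooth φ → TSmooth ψ →
      ∫ x, At (p + 1) φ x * ψ x ∂ν = ∫ x, φ x * Atp1star ψ x ∂ν)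
    -- (i) the family of weighted evolution operators, its minorization, its invariant
    -- measures and its uniform expansion
    (Δt0 : ℝ) (hΔt0 : 0 < Δt0)
    (κ : ℝ → Kernel (Torus d) (Torus d)) (hκfin : ∀ Δt, IsFiniteKernel (κ Δt))
    (hmin : ∀ Δt ∈ Set.Ioc (0:ℝ) Δt0, ∃ ε ∈ Set.Ioo (0:ℝ) 1, ∃ η : Measure (Torus d),
      IsProbabilityMeasure η ∧ Minorizes (evolOp (κ Δt)) ε η)
    (hQS : ∀ Δt ∈ Set.Ioc (0:ℝ) Δt0, ∀ φ, TSmooth φ → TSmooth (evolOp (κ Δt) φ))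
    (νd : ℝ → Measure (Torus d))
    (hνd : ∀ Δt ∈ Set.Ioc (0:ℝ) Δt0, IsProbabilityMeasure (νd Δt) ∧ FixedPt (κ Δt) (νd Δt))
    (hexp : ∃ c : ℝ, 0 < c ∧ ∃ m : ℕ, ∀ Δt ∈ Set.Ioc (0:ℝ) Δt0, ∀ φ, TSmooth φ → ∀ q,
      |evolOp (κ Δt) φ q - φ q - ∑ k ∈ Finset.Icc 1 (p + 1), Δt ^ k * At k φ q|
        ≤ c * Δt ^ (p + 2) * TCmNorm m φ)
    -- (ii) stability of `A_1 + W - λ` and of its adjoint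
    (hstab : ∀ g : Torus d → ℝ, TSmooth g → ∫ x, g x * hWfun x ∂ν = 0 →
      ∃! u : Torus d → ℝ, TSmooth u ∧ ∫ x, u x * hWfun x ∂ν = 0 ∧
        ∀ x, A1 u x + W x * u x - lam * u x = g x)
    (hstabstar : ∀ g : Torus d → ℝ, TSmooth g → ∫ x, g x * hWhat x ∂ν = 0 →
      ∃! u : Torus d → ℝ, TSmooth u ∧ ∫ x, u x * hWhat x ∂ν = 0 ∧
        ∀ x, A1star u x + W x * u x - lam * u x = g x)
    -- (iii) spectral consistency
    (hspec : ∀ x, A1 hWhat x + W x * hWhat x = lam * hWhat x)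
    (hWlam : ∫ x, W x * hWfun x ∂ν = lam)
    -- (iv) invariance
    (hinv : ∀ k ∈ Finset.Icc 1 p, ∃ a : ℝ, ∀ φ, TSmooth φ →
      ∫ x, At k φ x * hWfun x ∂ν = a * ∫ x, φ x * hWfun x ∂ν)
    -- the correction function: v = h_W f₀ solves `(A_1* + W - λ)(h_W f₀) = g̃`
    (v : Torus d → ℝ) (hvS : TSmooth v) (hvzero : ∫ x, v x * hWhat x ∂ν = 0)
    (hveq : ∀ x, A1star v x + W x * v x - lam * v x =
      -(Atp1star hWfun x) + hWfun x *
        ((∫ y, At (p + 1) hWhat y * hWfun y ∂ν) / (∫ y, hWhat y * hWfun y ∂ν))) :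
    -- conclusion, with `f = v/h_W − ∫ (v/h_W) dν_W`
    ∃ Δtstar ∈ Set.Ioc (0:ℝ) Δt0, ∃ C : ℝ, 0 < C ∧ ∃ m' : ℕ,
      ∀ Δt ∈ Set.Ioc (0:ℝ) Δtstar, ∀ φ : Torus d → ℝ, TSmooth φ →
        |(∫ x, φ x ∂(νd Δt)) - (∫ x, φ x * hWfun x ∂ν)
            - Δt ^ p * ∫ x, φ x * (v x / hWfun x - ∫ y, v y ∂ν) * hWfun x ∂ν|
          ≤ C * Δt ^ (p + 1) * TCmNorm m' φ := by
  obtain ⟨C, hC, m, hm⟩ := invariant_measure_error_estimate_general d p hp W hWsm ν lam hWhat hWfun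
    hhatS hhatpos hfunS hfunpos hfunnorm A1 At hAt1 hA1map hAtmap A1star hA1starmap hA1staradj
    Atp1star hAtp1starmap hAtp1staradj Δt0 κ hQS νd hνd (hexp.imp fun _ h => h.2)
    (fun g hg hg0 => (hstab g hg hg0).exists.imp fun u hu => ⟨hu.1, hu.2.2⟩) hspec hinv v hvS hveq
  exact ⟨Δt0, ⟨hΔt0, le_rfl⟩, C, hC, m, hm⟩
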